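/- Harish-Chandra/Itzykson–Zuber formula: for each n ≥ 1 there exists a constant c_n > 0, depending only on n, with the following property. Let A be a normal n×n complex matrix with distinct eigenvalues a_1, …, a_n, let μ be the Haar probability measure on the unitary group U(n), and let f : ℝ^n → ℂ be a continuous compactly supported function that is symmetric under permutations of its arguments. Then ∫_{U(n)} ∫_{ℝ^n} exp{ −(1/2) tr (A − U* B U)² } Δ(B)² f(b_1,…,b_n) db dμ(U) = c_n ∫_{ℝ^n} exp{ −(1/2) Σ_{j=1}^n (a_j − b_j)² } (Δ(B)/Δ(A)) f(b_1,…,b_n) db, where B = diag(b_1,…,b_n), Δ(B) = ∏_{i<j}(b_j − b_i) and Δ(A) = ∏_{i<j}(a_j − a_i). -/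

import Mathlib

open MeasureTheory

noncomputable section

/-- The Borel σ-algebra on complex matrices. -/
instance matrixMeasurableSpace (n : ℕ) : MeasurableSpace (Matrix (Fin n) (Fin n) ℂ) :=
  borel _

/-- The Vandermonde determinant `Δ(x₁,…,x_n) = ∏_{i<j} (x_j − x_i)`. -/
def vdmC {n : ℕ} (x : Fin n → ℂ) : ℂ := ∏ i, ∏ j ∈ Finset.Ioi i, (x j - x i)

open MvPolynomial

section DiffOp

variable {σ : Type*}

/-- Partial derivatives of polynomials commute. -/
theorem pderiv_pderiv_comm (i j : σ) (p : MvPolynomial σ ℂ) :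
    pderiv i (pderiv j p) = pderiv j (pderiv i p) := by
  classical
  have h : ⁅pderiv (R := ℂ) i, pderiv (R := ℂ) j⁆ = 0 := by
    refine MvPolynomial.derivation_ext fun k => ?_
    rw [Derivation.commutator_apply]
    simp only [pderiv_X, Pi.single_apply]
    split_ifs <;> simp
  have := DFunLike.congr_fun h p
  rw [Derivation.commutator_apply] at this
  simpa [sub_eq_zero] using this

/-- The partial derivative as a linear endomorphism. -/
def pd (i : σ) : Module.End ℂ (MvPolynomial σ ℂ) := (pderiv i).toLinearMap

@[simp] theorem pd_apply (i : σ) (p : MvPolynomial σ ℂ) : pd i p = pderiv i p := rfl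

theorem pd_mul_comm (i j : σ) : pd i * pd j = pd (σ := σ) j * pd i :=
  LinearMap.ext fun p => pderiv_pderiv_comm i j p

/-- The constant coefficient differential operator obtained from a polynomial by substituting
`∂/∂x_{τ i}` for `x_i`. -/
def diffOp (τ : σ → σ) : MvPolynomial σ ℂ →ₐ[ℂ] Module.End ℂ (MvPolynomial σ ℂ) :=
  haveI := Algebra.isMulCommutative_adjoin ℂ (s := Set.range fun i => pd (τ i)) (by
    rintro _ ⟨i, rfl⟩ _ ⟨j, rfl⟩
    exact pd_mul_comm _ _)
  letI : CommRing (Algebra.adjoin ℂ (Set.range fun i => pd (τ i))) :=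
    { (inferInstance : Ring (Algebra.adjoin ℂ (Set.range fun i => pd (τ i)))) with
      mul_comm := fun a b => IsMulCommutative.is_comm.comm a b }
  (Algebra.adjoin ℂ (Set.range fun i => pd (τ i))).val.comp
    (aeval fun i => ⟨pd (τ i), Algebra.subset_adjoin ⟨i, rfl⟩⟩)

@[simp] theorem diffOp_X (τ : σ → σ) (i : σ) : diffOp τ (X i) = pd (τ i) := by
  simp [diffOp]

/-- Multiplication by a polynomial as a linear endomorphism. -/
def mulOp (p : MvPolynomial σ ℂ) : Module.End ℂ (MvPolynomial σ ℂ) := LinearMap.mulLeft ℂ p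

@[simp] theorem mulOp_apply (p q : MvPolynomial σ ℂ) : mulOp p q = p * q := rfl

theorem mulOp_mul (p q : MvPolynomial σ ℂ) : mulOp (p * q) = mulOp p * mulOp q :=
  LinearMap.ext fun r => mul_assoc p q r

variable [Fintype σ]

/-- The Laplacian `∑ ∂_i ∂_{τ i}`. -/
def lap (τ : σ → σ) : Module.End ℂ (MvPolynomial σ ℂ) := ∑ i, pd i * pd (τ i)

theorem lap_apply (τ : σ → σ) (p : MvPolynomial σ ℂ) :
    lap τ p = ∑ i, pderiv i (pderiv (τ i) p) := by
  simp [lap]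

/-- The commutator with the Laplacian. -/
def adLap (τ : σ → σ) : Module.End ℂ (Module.End ℂ (MvPolynomial σ ℂ)) :=
  LinearMap.mulLeft ℂ (lap τ) - LinearMap.mulRight ℂ (lap τ)

theorem adLap_apply (τ : σ → σ) (T : Module.End ℂ (MvPolynomial σ ℂ)) :
    adLap τ T = lap τ * T - T * lap τ := rfl

theorem adLap_mul (τ : σ → σ) (S T : Module.End ℂ (MvPolynomial σ ℂ)) :
    adLap τ (S * T) = adLap τ S * T + S * adLap τ T := by
  simp only [adLap_apply, sub_mul, mul_sub, mul_assoc]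
  abel

theorem adLap_pd (τ : σ → σ) (i : σ) : adLap τ (pd i) = 0 := by
  rw [adLap_apply, lap, Finset.sum_mul, Finset.mul_sum, sub_eq_zero]
  refine Finset.sum_congr rfl fun j _ => ?_
  rw [mul_assoc, pd_mul_comm (τ j), ← mul_assoc, pd_mul_comm j, mul_assoc]

theorem adLap_diffOp (τ : σ → σ) (p : MvPolynomial σ ℂ) : adLap τ (diffOp τ p) = 0 := by
  induction p using MvPolynomial.induction_on with
  | C a =>
    have : diffOp τ (C a) = a • 1 := by
      rw [← algebraMap_eq, AlgHom.commutes, Algebra.algebraMap_eq_smul_one]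
    rw [this]; simp [adLap_apply]
  | add p q hp hq => rw [map_add, map_add, hp, hq, add_zero]
  | mul_X p i hp => rw [map_mul, adLap_mul, hp, diffOp_X, adLap_pd]; simp

theorem adLap_mulOp_X {τ : σ → σ} (hτ : Function.Involutive τ) (i : σ) :
    adLap τ (mulOp (X i)) = (2 : ℂ) • pd (τ i) := by
  classical
  refine LinearMap.ext fun p => ?_
  simp only [adLap_apply, LinearMap.sub_apply, Module.End.mul_apply, lap_apply, mulOp_apply,
    Finset.mul_sum, ← Finset.sum_sub_distrib, LinearMap.smul_apply, pd_apply]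
  have h : ∀ j, pderiv j (pderiv (τ j) (X i * p)) - X i * pderiv j (pderiv (τ j) p)
      = (if j = τ i then pderiv (τ i) p else 0) + (if j = i then pderiv (τ i) p else 0) := by
    intro j
    have e : (i = τ j) ↔ (j = τ i) := by
      constructor
      · rintro rfl; exact (hτ j).symm
      · rintro rfl; exact (hτ i).symm
    simp only [pderiv_mul, pderiv_X, Pi.single_apply, map_add]
    by_cases h1 : j = τ i
    · subst h1
      by_cases h2 : τ i = i
      · simp [h2]; ring
      · have h3 : i ≠ τ i := fun h => h2 h.symm
        simp [hτ i, h2, h3]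
    · have h1' : i ≠ τ j := fun h => h1 (e.1 h)
      by_cases h2 : j = i
      · subst h2; simp [h1]
      · simp [h1, h1', h2, Ne.symm h2]
  rw [Finset.sum_congr rfl fun j _ => h j, Finset.sum_add_distrib]
  simp [two_smul]

theorem adLap_pow_succ_mul_of_adLap_adLap_eq_zero (τ : σ → σ)
    {S : Module.End ℂ (MvPolynomial σ ℂ)} (hS : adLap τ (adLap τ S) = 0)
    (T : Module.End ℂ (MvPolynomial σ ℂ)) (k : ℕ) :
    (adLap τ ^ (k + 1)) (S * T) =
      S * (adLap τ ^ (k + 1)) T + ((k : ℂ) + 1) • (adLap τ S * (adLap τ ^ k) T) := by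
  induction k with
  | zero => simp [adLap_mul, add_comm]
  | succ k ih =>
    rw [pow_succ', Module.End.mul_apply, ih, map_add, map_smul, adLap_mul, adLap_mul, hS,
      Module.End.mul_apply, zero_mul, zero_add, ← Module.End.mul_apply (adLap τ) (adLap τ ^ k) T,
      ← pow_succ']
    push_cast
    module

/-- For a homogeneous polynomial of degree `k`, the `k`-fold commutator of multiplication by it
with the Laplacian is a multiple of the corresponding differential operator. -/
theorem adLap_pow_mulOp_monomial {τ : σ → σ} (hτ : Function.Involutive τ) (k : ℕ) :
    ∀ (s : σ →₀ ℕ) (c : ℂ), s.degree = k →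
      (adLap τ ^ k) (mulOp (monomial s c)) = (2 ^ k * k.factorial : ℂ) • diffOp τ (monomial s c) := by
  induction k with
  | zero =>
    intro s c hs
    obtain rfl : s = 0 := (Finsupp.degree_eq_zero_iff s).1 hs
    have h1 : diffOp τ (monomial 0 c) = c • 1 := by
      rw [← C_apply, ← algebraMap_eq, AlgHom.commutes, Algebra.algebraMap_eq_smul_one]
    rw [h1]
    refine LinearMap.ext fun p => ?_
    simp [← C_apply, C_mul']
  | succ k ih =>
    intro s c hs
    obtain ⟨i, hi⟩ : ∃ i, s i ≠ 0 := by
      by_contra! h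
      obtain rfl : s = 0 := Finsupp.ext h
      simp at hs
    set t := s - Finsupp.single i 1 with ht
    have hst : s = Finsupp.single i 1 + t := by
      rw [ht, add_tsub_cancel_of_le]
      rw [Finsupp.single_le_iff]; omega
    have hdt : t.degree = k := by
      rw [hst, map_add, Finsupp.degree_single] at hs; omega
    have hm : monomial s c = X i * monomial t c := by
      rw [hst, X, monomial_mul, one_mul]
    have h2 : adLap τ (adLap τ (mulOp (X i))) = 0 := by
      rw [adLap_mulOp_X hτ, map_smul, adLap_pd, smul_zero]
    rw [hm, mulOp_mul, adLap_pow_succ_mul_of_adLap_adLap_eq_zero τ h2, pow_succ',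
      Module.End.mul_apply, ih t c hdt, map_smul, adLap_diffOp, adLap_mulOp_X hτ, map_mul, diffOp_X,
      Nat.factorial_succ]
    simp only [smul_zero, mul_zero, zero_add, smul_mul_assoc, mul_smul_comm, smul_smul]
    congr 1
    push_cast
    ring

theorem adLap_pow_mulOp {τ : σ → σ} (hτ : Function.Involutive τ) {k : ℕ} {p : MvPolynomial σ ℂ}
    (hp : p.IsHomogeneous k) :
    (adLap τ ^ k) (mulOp p) = (2 ^ k * k.factorial : ℂ) • diffOp τ p := by
  let F : MvPolynomial σ ℂ →ₗ[ℂ] Module.End ℂ (MvPolynomial σ ℂ) :=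
    (adLap τ ^ k) ∘ₗ LinearMap.mul ℂ (MvPolynomial σ ℂ)
  change F p = _
  rw [p.as_sum, map_sum, map_sum, Finset.smul_sum]
  refine Finset.sum_congr rfl fun s hs => adLap_pow_mulOp_monomial hτ k s _ ?_
  rw [Finsupp.degree_eq_weight_one]
  exact hp (mem_support_iff.1 hs)

/-- The homogeneous component of degree `m` of `exp (∑ c_i x_i)`. -/
def expPart (c : σ → ℂ) (m : ℕ) : MvPolynomial σ ℂ :=
  (m.factorial : ℂ)⁻¹ • (∑ i, c i • X i) ^ m

theorem eval_expPart (c x : σ → ℂ) (m : ℕ) :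
    eval x (expPart c m) = (m.factorial : ℂ)⁻¹ * (∑ i, c i * x i) ^ m := by
  simp [expPart, smul_eval]

theorem isHomogeneous_expPart (c : σ → ℂ) (m : ℕ) : (expPart c m).IsHomogeneous m := by
  have h : (∑ i, c i • X i : MvPolynomial σ ℂ).IsHomogeneous 1 :=
    IsHomogeneous.sum _ _ _ fun i _ =>
      (homogeneousSubmodule σ ℂ 1).smul_mem _ (isHomogeneous_X ℂ i)
  have h2 := h.pow m
  rw [one_mul] at h2
  exact (homogeneousSubmodule σ ℂ m).smul_mem _ h2

theorem pderiv_expPart_zero (c : σ → ℂ) (i : σ) : pderiv i (expPart c 0) = 0 := by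
  simp [expPart]

theorem pderiv_expPart_succ (c : σ → ℂ) (i : σ) (m : ℕ) :
    pderiv i (expPart c (m + 1)) = c i • expPart c m := by
  classical
  have h : pderiv i (∑ j, c j • X j : MvPolynomial σ ℂ) = C (c i) := by
    simp [pderiv_X, Pi.single_apply, smul_eq_C_mul]
  have h0 : ((m : ℂ) + 1) ≠ 0 := by exact_mod_cast m.succ_ne_zero
  simp only [expPart, Derivation.map_smul, pderiv_pow, h, Nat.add_sub_cancel, Nat.factorial_succ]
  simp only [smul_eq_C_mul]
  have h1 : C ((((m + 1) * m.factorial : ℕ) : ℂ)⁻¹) * ((m + 1 : ℕ) : MvPolynomial σ ℂ)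
      = C ((m.factorial : ℂ)⁻¹) := by
    rw [← map_natCast (C : ℂ →+* MvPolynomial σ ℂ), ← C_mul]
    congr 1
    push_cast
    field_simp
  rw [← h1]
  ring

/-- The homogeneous components of the exponential, with a shift of the degree;
components of negative degree vanish. -/
theorem diffOp_monomial_expPart (τ : σ → σ) (c : σ → ℂ) (k : ℕ) :
    ∀ (s : σ →₀ ℕ) (r : ℂ) (m : ℕ), s.degree = k →
      diffOp τ (monomial s r) (expPart c m) =
        if k ≤ m then eval (c ∘ τ) (monomial s r) • expPart c (m - k) else 0 := by
  induction k with
  | zero =>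
    intro s r m hs
    obtain rfl : s = 0 := (Finsupp.degree_eq_zero_iff s).1 hs
    have h1 : diffOp τ (monomial 0 r) = r • 1 := by
      rw [← C_apply, ← algebraMap_eq, AlgHom.commutes, Algebra.algebraMap_eq_smul_one]
    rw [h1]
    simp
  | succ k ih =>
    intro s r m hs
    obtain ⟨i, hi⟩ : ∃ i, s i ≠ 0 := by
      by_contra! h
      obtain rfl : s = 0 := Finsupp.ext h
      simp at hs
    set t := s - Finsupp.single i 1 with ht
    have hst : s = t + Finsupp.single i 1 := by
      rw [ht, tsub_add_cancel_of_le]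
      rw [Finsupp.single_le_iff]; omega
    have hdt : t.degree = k := by
      rw [hst, map_add, Finsupp.degree_single] at hs; omega
    have hm : monomial s r = monomial t r * X i := by
      rw [hst, X, monomial_mul, mul_one]
    rw [hm, map_mul, Module.End.mul_apply, diffOp_X, pd_apply]
    cases m with
    | zero => simp [pderiv_expPart_zero]
    | succ m =>
      rw [pderiv_expPart_succ, map_smul, ih t r m hdt, map_mul, eval_X]
      by_cases h : k ≤ m
      · simp [h, smul_smul, mul_comm]
      · simp [h]

theorem diffOp_expPart (τ : σ → σ) (c : σ → ℂ) {k : ℕ} {p : MvPolynomial σ ℂ}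
    (hp : p.IsHomogeneous k) (m : ℕ) :
    diffOp τ p (expPart c m) = if k ≤ m then eval (c ∘ τ) p • expPart c (m - k) else 0 := by
  have h : ∀ s ∈ p.support, diffOp τ (monomial s (coeff s p)) (expPart c m) =
      if k ≤ m then eval (c ∘ τ) (monomial s (coeff s p)) • expPart c (m - k) else 0 := by
    intro s hs
    refine diffOp_monomial_expPart τ c k s _ m ?_
    rw [Finsupp.degree_eq_weight_one]
    exact hp (mem_support_iff.1 hs)
  conv_lhs => rw [p.as_sum, map_sum, LinearMap.sum_apply, Finset.sum_congr rfl h]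
  split_ifs
  · conv_rhs => rw [p.as_sum, map_sum, Finset.sum_smul]
  · simp

end DiffOp

section Antisymmetric

variable {n : ℕ}

/-- The Vandermonde polynomial `∏_{i<j} (x_j - x_i)`. -/
def vdmP (n : ℕ) : MvPolynomial (Fin n) ℂ := ∏ i, ∏ j ∈ Finset.Ioi i, (X j - X i)

theorem eval_vdmP (a : Fin n → ℂ) : eval a (vdmP n) = vdmC a := by
  simp [vdmP, vdmC, map_prod]

theorem vdmP_eq_det : vdmP n = (Matrix.vandermonde (X : Fin n → MvPolynomial (Fin n) ℂ)).det :=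
  (Matrix.det_vandermonde _).symm

theorem vdmC_eq_det (a : Fin n → ℂ) : vdmC a = (Matrix.vandermonde a).det :=
  (Matrix.det_vandermonde _).symm

theorem vdmC_ne_zero {a : Fin n → ℂ} (ha : Function.Injective a) : vdmC a ≠ 0 := by
  rw [vdmC_eq_det]
  exact Matrix.det_vandermonde_ne_zero_iff.2 ha

theorem vdmC_comp_perm (a : Fin n → ℂ) (π : Equiv.Perm (Fin n)) :
    vdmC (a ∘ π) = ((Equiv.Perm.sign π : ℤ) : ℂ) * vdmC a := by
  rw [vdmC_eq_det, vdmC_eq_det, ← Matrix.det_permute]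
  rfl

/-- A polynomial is antisymmetric if a permutation of the variables multiplies it by the
signature. -/
def IsAlternatingPoly (q : MvPolynomial (Fin n) ℂ) : Prop :=
  ∀ π : Equiv.Perm (Fin n), rename π q = ((Equiv.Perm.sign π : ℤ) : ℂ) • q

theorem isAlternatingPoly_vdmP : IsAlternatingPoly (vdmP n) := by
  intro π
  refine MvPolynomial.funext fun a => ?_
  rw [eval_rename, smul_eval, eval_vdmP, eval_vdmP, vdmC_comp_perm]

theorem IsAlternatingPoly.sub {p q : MvPolynomial (Fin n) ℂ} (hp : IsAlternatingPoly p)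
    (hq : IsAlternatingPoly q) : IsAlternatingPoly (p - q) := fun π => by rw [map_sub, hp π, hq π, smul_sub]

theorem IsAlternatingPoly.smul {p : MvPolynomial (Fin n) ℂ} (hp : IsAlternatingPoly p) (c : ℂ) :
    IsAlternatingPoly (c • p) := fun π => by rw [map_smul, hp π, smul_comm]

theorem isAlternatingPoly_zero : IsAlternatingPoly (0 : MvPolynomial (Fin n) ℂ) := fun π => by simp

theorem IsAlternatingPoly.coeff_mapDomain {q : MvPolynomial (Fin n) ℂ} (hq : IsAlternatingPoly q)
    (π : Equiv.Perm (Fin n)) (s : Fin n →₀ ℕ) :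
    coeff s q = ((Equiv.Perm.sign π : ℤ) : ℂ) * coeff (s.mapDomain π) q := by
  rw [← coeff_rename_mapDomain π π.injective, hq π, coeff_smul, smul_eq_mul]

/-- The exponent `(0, 1, …, n - 1)`. -/
def delta (n : ℕ) : Fin n →₀ ℕ := Finsupp.equivFunOnFinite.symm fun i => (i : ℕ)

@[simp] theorem delta_apply (i : Fin n) : delta n i = i := rfl

/-- An antisymmetric polynomial whose degree in each variable is less than `n` is a multiple of
the Vandermonde polynomial. -/
theorem IsAlternatingPoly.eq_zero {q : MvPolynomial (Fin n) ℂ} (hq : IsAlternatingPoly q)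
    (hdeg : ∀ (s : Fin n →₀ ℕ) (i : Fin n), n ≤ s i → coeff s q = 0)
    (hδ : coeff (delta n) q = 0) : q = 0 := by
  refine MvPolynomial.ext _ _ fun s => ?_
  rw [coeff_zero]
  by_cases hlt : ∀ i, s i < n
  · by_cases hinj : Function.Injective s
    · let f : Fin n → Fin n := fun i => ⟨s i, hlt i⟩
      have hf : Function.Injective f := fun i j h => hinj (by simpa [f] using h)
      let π : Equiv.Perm (Fin n) := Equiv.ofBijective f (Finite.injective_iff_bijective.1 hf)
      have : s.mapDomain π = delta n := by
        ext i
        obtain ⟨j, rfl⟩ := π.surjective i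
        rw [Finsupp.mapDomain_apply π.injective]
        rfl
      rw [hq.coeff_mapDomain π, this, hδ, mul_zero]
    · obtain ⟨i, j, hij, hne⟩ : ∃ i j, s i = s j ∧ i ≠ j := by
        simpa [Function.Injective] using hinj
      have h1 := hq.coeff_mapDomain (Equiv.swap i j) s
      have h2 : s.mapDomain (Equiv.swap i j) = s := by
        ext k
        obtain ⟨l, rfl⟩ := (Equiv.swap i j).surjective k
        rw [Finsupp.mapDomain_apply (Equiv.swap i j).injective]
        by_cases hi : l = i
        · subst hi; simp [hij]
        · by_cases hj : l = j
          · subst hj; simp [hij]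
          · rw [Equiv.swap_apply_of_ne_of_ne hi hj]
      rw [h2, Equiv.Perm.sign_swap hne] at h1
      simp only [Units.val_neg, Units.val_one, Int.cast_neg, Int.cast_one] at h1
      linear_combination h1 / 2
  · push Not at hlt
    obtain ⟨i, hi⟩ := hlt
    exact hdeg s i hi

theorem vdmP_eq_sum_monomial : vdmP n = ∑ π : Equiv.Perm (Fin n),
    monomial ((delta n).mapDomain π) ((Equiv.Perm.sign π : ℤ) : ℂ) := by
  rw [vdmP_eq_det, Matrix.det_apply]
  refine Finset.sum_congr rfl fun π _ => ?_
  rw [monomial_eq, Units.smul_def, zsmul_eq_mul, ← map_intCast (C : ℂ →+* MvPolynomial (Fin n) ℂ)]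
  congr 1
  rw [Finsupp.prod_fintype _ _ (by simp), ← Equiv.prod_comp π (fun i => X i ^ _)]
  refine Finset.prod_congr rfl fun i _ => ?_
  rw [Finsupp.mapDomain_apply π.injective]
  rfl

theorem coeff_vdmP_of_le (s : Fin n →₀ ℕ) (i : Fin n) (hi : n ≤ s i) : coeff s (vdmP n) = 0 := by
  rw [vdmP_eq_sum_monomial, coeff_sum]
  refine Finset.sum_eq_zero fun π _ => ?_
  rw [coeff_monomial, if_neg]
  rintro rfl
  obtain ⟨j, rfl⟩ := π.surjective i
  rw [Finsupp.mapDomain_apply π.injective, delta_apply] at hi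
  omega

theorem coeff_delta_vdmP : coeff (delta n) (vdmP n) = 1 := by
  rw [vdmP_eq_sum_monomial, coeff_sum, Finset.sum_eq_single 1]
  · simp [Finsupp.mapDomain_id]
  · intro π _ hπ
    rw [coeff_monomial, if_neg]
    intro h
    apply hπ
    ext i
    have := DFunLike.congr_fun h (π i)
    rw [Finsupp.mapDomain_apply π.injective] at this
    simpa using this.symm
  · simp

theorem isHomogeneous_vdmP : (vdmP n).IsHomogeneous (delta n).degree := by
  rw [vdmP_eq_sum_monomial]
  refine IsHomogeneous.sum _ _ _ fun π _ => isHomogeneous_monomial _ ?_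
  rw [Finsupp.degree_eq_sum, Finsupp.degree_eq_sum, ← Equiv.sum_comp π]
  exact Finset.sum_congr rfl fun i _ => Finsupp.mapDomain_apply π.injective _ _

theorem lap_rename (π : Equiv.Perm (Fin n)) (q : MvPolynomial (Fin n) ℂ) :
    lap id (rename π q) = rename π (lap id q) := by
  simp only [lap_apply, id, map_sum]
  rw [← Equiv.sum_comp π]
  refine Finset.sum_congr rfl fun i _ => ?_
  rw [pderiv_rename π.injective, pderiv_rename π.injective]

/-- The Vandermonde polynomial is harmonic. -/
theorem lap_vdmP : lap id (vdmP n) = 0 := by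
  have hc : ∀ s, coeff s (lap id (vdmP n)) = ∑ i, coeff
      (s + Finsupp.single i 1 + Finsupp.single i 1) (vdmP n) *
        ((s i : ℂ) + 1 + 1) * ((s i : ℂ) + 1) := by
    intro s
    simp [lap_apply, coeff_sum, coeff_pderiv]
  refine IsAlternatingPoly.eq_zero (fun π => ?_) (fun s i hi => ?_) ?_
  · rw [← lap_rename, isAlternatingPoly_vdmP, map_smul]
  · rw [hc]
    refine Finset.sum_eq_zero fun j _ => ?_
    rw [coeff_vdmP_of_le _ i, zero_mul, zero_mul]
    simp only [Finsupp.add_apply]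
    omega
  · rw [hc]
    refine Finset.sum_eq_zero fun j _ => ?_
    rw [isHomogeneous_vdmP.coeff_eq_zero, zero_mul, zero_mul]
    rw [map_add, map_add, Finsupp.degree_single]
    omega

theorem exists_coeff_pd_pow (i : Fin n) (k : ℕ) (q : MvPolynomial (Fin n) ℂ) (s : Fin n →₀ ℕ) :
    ∃ c : ℂ, c ≠ 0 ∧ coeff s ((pd i ^ k) q) = c * coeff (s + Finsupp.single i k) q := by
  induction k generalizing s with
  | zero => exact ⟨1, one_ne_zero, by simp⟩
  | succ k ih =>
    obtain ⟨c, hc, h⟩ := ih (s + Finsupp.single i 1)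
    refine ⟨c * (s i + 1), mul_ne_zero hc (by exact_mod_cast (s i).succ_ne_zero), ?_⟩
    rw [pow_succ', Module.End.mul_apply, pd_apply, coeff_pderiv, h, add_assoc,
      ← Finsupp.single_add, add_comm 1 k]
    ring

theorem coeff_eq_zero_of_pd_pow_eq_zero {i : Fin n} {k : ℕ} {q : MvPolynomial (Fin n) ℂ}
    (h : (pd i ^ k) q = 0) (s : Fin n →₀ ℕ) (hs : k ≤ s i) : coeff s q = 0 := by
  obtain ⟨c, hc, h2⟩ := exists_coeff_pd_pow i k q (s - Finsupp.single i k)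
  rw [h, coeff_zero, tsub_add_cancel_of_le (Finsupp.single_le_iff.2 hs)] at h2
  exact (mul_eq_zero.1 h2.symm).resolve_left hc

end Antisymmetric

section Radial

variable {n : ℕ}

/-- The derivation of polynomial functions of a matrix `A` given by the vector field
`[E_{ij}, A]`. -/
def conjDeriv (i j : Fin n) :
    Derivation ℂ (MvPolynomial (Fin n × Fin n) ℂ) (MvPolynomial (Fin n × Fin n) ℂ) :=
  ∑ l, ((X (j, l) : MvPolynomial (Fin n × Fin n) ℂ) • pderiv (i, l)
    - (X (l, i) : MvPolynomial (Fin n × Fin n) ℂ) • pderiv (l, j))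

theorem conjDeriv_apply (i j : Fin n) (ψ : MvPolynomial (Fin n × Fin n) ℂ) :
    conjDeriv i j ψ = ∑ l, (X (j, l) * pderiv (i, l) ψ - X (l, i) * pderiv (l, j) ψ) := by
  rw [conjDeriv, ← Derivation.coeFnAddMonoidHom_apply, map_sum, Finset.sum_apply]
  rfl

/-- Infinitesimal invariance under conjugation. -/
def IsConjInv (ψ : MvPolynomial (Fin n × Fin n) ℂ) : Prop := ∀ i j, conjDeriv i j ψ = 0

theorem IsConjInv.mul {p q : MvPolynomial (Fin n × Fin n) ℂ} (hp : IsConjInv p)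
    (hq : IsConjInv q) : IsConjInv (p * q) := fun i j => by
  rw [Derivation.leibniz, hp, hq, smul_zero, smul_zero, add_zero]

theorem IsConjInv.sub {p q : MvPolynomial (Fin n × Fin n) ℂ} (hp : IsConjInv p)
    (hq : IsConjInv q) : IsConjInv (p - q) := fun i j => by
  rw [map_sub, hp, hq, sub_zero]

theorem lap_X_mul (i j : Fin n) (q : MvPolynomial (Fin n × Fin n) ℂ) :
    lap Prod.swap (X (i, j) * q) = X (i, j) * lap Prod.swap q + 2 * pderiv (j, i) q := by
  have h := LinearMap.congr_fun (adLap_mulOp_X (τ := (Prod.swap : Fin n × Fin n → _))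
    Prod.swap_swap (i, j)) q
  simp only [adLap_apply, LinearMap.sub_apply, Module.End.mul_apply, mulOp_apply,
    LinearMap.smul_apply, pd_apply, Prod.swap_prod_mk, smul_eq_C_mul, map_ofNat] at h
  linear_combination h

theorem lap_pderiv {σ : Type*} [Fintype σ] (τ : σ → σ) (i : σ) (q : MvPolynomial σ ℂ) :
    lap τ (pderiv i q) = pderiv i (lap τ q) := by
  have h := LinearMap.congr_fun (adLap_pd τ i) q
  simpa [adLap_apply, sub_eq_zero] using h

theorem IsConjInv.lap {p : MvPolynomial (Fin n × Fin n) ℂ} (hp : IsConjInv p) :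
    IsConjInv (lap Prod.swap p) := fun i j => by
  have h := congrArg (_root_.lap Prod.swap) (hp i j)
  rw [map_zero, conjDeriv_apply, map_sum] at h
  rw [conjDeriv_apply, ← h]
  refine Finset.sum_congr rfl fun l _ => ?_
  rw [map_sub, lap_X_mul, lap_X_mul, lap_pderiv, lap_pderiv, pderiv_pderiv_comm (l, j) (i, l)]
  ring

/-- Restriction of a polynomial function of a matrix to diagonal matrices. -/
def resDiag : MvPolynomial (Fin n × Fin n) ℂ →ₐ[ℂ] MvPolynomial (Fin n) ℂ :=
  aeval fun p => if p.1 = p.2 then X p.1 else 0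

theorem resDiag_X (i j : Fin n) :
    resDiag (X (i, j)) = if i = j then (X i : MvPolynomial (Fin n) ℂ) else 0 := by
  simp [resDiag]

theorem eval_resDiag (a : Fin n → ℂ) (ψ : MvPolynomial (Fin n × Fin n) ℂ) :
    eval a (resDiag ψ) = eval (fun p => Matrix.diagonal a p.1 p.2) ψ := by
  induction ψ using MvPolynomial.induction_on with
  | C c => simp [resDiag]
  | add p q hp hq => simp [hp, hq]
  | mul_X p i hp =>
    rw [map_mul, map_mul, map_mul, hp, eval_X, ← Prod.mk.eta (p := i), resDiag_X, Matrix.diagonal]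
    congr 1
    simp only [Matrix.of_apply]
    split_ifs <;> simp

theorem pderiv_resDiag (i : Fin n) (ψ : MvPolynomial (Fin n × Fin n) ℂ) :
    pderiv i (resDiag ψ) = resDiag (pderiv (i, i) ψ) := by
  induction ψ using MvPolynomial.induction_on with
  | C c => simp [resDiag]
  | add p q hp hq => simp [hp, hq]
  | mul_X p k hp =>
    obtain ⟨k, l⟩ := k
    simp only [map_mul, pderiv_mul, map_add, hp, resDiag_X, pderiv_X, Pi.single_apply, Prod.mk.injEq]
    congr 2
    by_cases h : k = l
    · subst h
      simp only [if_true, and_self, pderiv_X, Pi.single_apply]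
      split_ifs <;> simp
    · have : ¬ (k = i ∧ l = i) := fun h' => h (h'.1.trans h'.2.symm)
      simp [h, this]

theorem IsConjInv.resDiag_pderiv_pderiv {ψ : MvPolynomial (Fin n × Fin n) ℂ} (hψ : IsConjInv ψ)
    (i j : Fin n) :
    (X i - X j) * resDiag (pderiv (i, j) (pderiv (j, i) ψ)) =
      pderiv i (resDiag ψ) - pderiv j (resDiag ψ) := by
  have h := congrArg (fun q => resDiag (pderiv (j, i) q)) (hψ i j)
  simp only [conjDeriv_apply, map_sum, map_sub, map_zero, pderiv_mul, map_add, map_mul, resDiag_X,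
    pderiv_X, Pi.single_apply, Prod.mk.injEq] at h
  simp only [true_and, and_true, Finset.sum_sub_distrib, Finset.sum_add_distrib] at h
  simp only [apply_ite resDiag, map_one, map_zero, ite_mul, one_mul, zero_mul, Finset.sum_ite_eq,
    Finset.sum_ite_eq', Finset.mem_univ, if_true] at h
  rw [pderiv_resDiag, pderiv_resDiag, pderiv_pderiv_comm]
  linear_combination -h

theorem eval_derivation_prod {σ ι : Type*} (D : Derivation ℂ (MvPolynomial σ ℂ) (MvPolynomial σ ℂ))
    (a : σ → ℂ) (s : Finset ι) (p : ι → MvPolynomial σ ℂ) (hp : ∀ i ∈ s, eval a (p i) ≠ 0) :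
    eval a (D (∏ i ∈ s, p i)) =
      eval a (∏ i ∈ s, p i) * ∑ i ∈ s, eval a (D (p i)) / eval a (p i) := by
  classical
  induction s using Finset.induction_on with
  | empty => simp
  | insert i s hi ih =>
    have h0 := hp i (Finset.mem_insert_self i s)
    rw [Finset.prod_insert hi, Finset.sum_insert hi, Derivation.leibniz, map_add, smul_eq_mul,
      smul_eq_mul, map_mul, map_mul, map_mul, ih fun j hj => hp j (Finset.mem_insert_of_mem hj)]
    field_simp
    ring

theorem eval_pderiv_vdmP {a : Fin n → ℂ} (ha : Function.Injective a) (i : Fin n) :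
    eval a (pderiv i (vdmP n)) = vdmC a * ∑ j, (a i - a j)⁻¹ := by
  have h1 : ∀ k, ∀ l ∈ Finset.Ioi k, eval a (X l - X k : MvPolynomial (Fin n) ℂ) ≠ 0 := by
    intro k l hl
    simp only [map_sub, eval_X, sub_ne_zero]
    exact fun h => (Finset.mem_Ioi.1 hl).ne' (ha h)
  have h2 : ∀ k ∈ Finset.univ,
      eval a (∏ l ∈ Finset.Ioi k, (X l - X k) : MvPolynomial (Fin n) ℂ) ≠ 0 := by
    intro k _
    rw [map_prod]
    exact Finset.prod_ne_zero_iff.2 (h1 k)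
  rw [← eval_vdmP, vdmP, eval_derivation_prod _ _ _ _ h2]
  congr 1
  have h3 : ∀ k : Fin n, eval a (pderiv i (∏ l ∈ Finset.Ioi k, (X l - X k))) /
      eval a (∏ l ∈ Finset.Ioi k, (X l - X k)) =
      ∑ l, ((if i = l then (if k < l then (a l - a k)⁻¹ else 0) else 0) +
        (if i = k then (if k < l then (a k - a l)⁻¹ else 0) else 0)) := by
    intro k
    rw [eval_derivation_prod _ _ _ _ (h1 k), mul_div_cancel_left₀ _ (h2 k (Finset.mem_univ k)),
      ← Finset.filter_lt_eq_Ioi, Finset.sum_filter]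
    refine Finset.sum_congr rfl fun l _ => ?_
    rw [← neg_sub (a l) (a k), inv_neg]
    simp only [map_sub, pderiv_X, eval_X, Pi.single_apply]
    by_cases hkl : k < l
    · simp only [hkl, if_true, eq_comm (a := i), apply_ite (eval a), map_one, map_zero,
        sub_eq_add_neg]
      split_ifs <;> simp [neg_div]
    · simp [hkl]
  rw [Finset.sum_congr rfl fun k _ => h3 k]
  simp only [Finset.sum_add_distrib, Finset.sum_ite_eq, Finset.mem_univ, if_true]
  rw [Finset.sum_comm (γ := Fin n) (f := fun k l => if i = k then _ else _)]
  simp only [Finset.sum_ite_eq, Finset.mem_univ, if_true]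
  rw [← Finset.sum_add_distrib]
  refine Finset.sum_congr rfl fun j _ => ?_
  rcases lt_trichotomy i j with h | h | h
  · simp [h, h.not_gt]
  · simp [h]
  · simp [h, h.not_gt]

/-- The radial part of the Laplacian on matrices. -/
theorem IsConjInv.vdmP_mul_resDiag_lap {ψ : MvPolynomial (Fin n × Fin n) ℂ} (hψ : IsConjInv ψ) :
    vdmP n * resDiag (_root_.lap Prod.swap ψ) = _root_.lap id (vdmP n * resDiag ψ) := by
  set f := resDiag ψ with hf
  have hΔ : vdmP n ≠ 0 := fun h => by
    have := coeff_delta_vdmP (n := n)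
    simp [h] at this
  refine mul_left_cancel₀ hΔ (MvPolynomial.funext fun a => ?_)
  by_cases ha : Function.Injective a
  swap
  · have : vdmC a = 0 := by
      rw [vdmC_eq_det]
      by_contra h
      exact ha (Matrix.det_vandermonde_ne_zero_iff.1 h)
    rw [map_mul _ (vdmP n), map_mul _ (vdmP n) (_root_.lap _ _), eval_vdmP, this, zero_mul, zero_mul]
  suffices eval a (vdmP n * resDiag (_root_.lap Prod.swap ψ)) =
      eval a (_root_.lap id (vdmP n * f)) by
    rw [map_mul _ (vdmP n), map_mul _ (vdmP n) (_root_.lap _ _), this]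
  have e1 : _root_.lap id (vdmP n * f) = vdmP n * ∑ i, pderiv i (pderiv i f)
      + 2 * ∑ i, pderiv i (vdmP n) * pderiv i f := by
    have h0 := lap_vdmP (n := n)
    simp only [lap_apply, id] at h0 ⊢
    have : ∀ i, pderiv i (pderiv i (vdmP n * f)) = vdmP n * pderiv i (pderiv i f) +
        2 * (pderiv i (vdmP n) * pderiv i f) + pderiv i (pderiv i (vdmP n)) * f := by
      intro i
      simp only [pderiv_mul, map_add]
      ring
    rw [Finset.sum_congr rfl fun i _ => this i, Finset.sum_add_distrib, Finset.sum_add_distrib,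
      ← Finset.sum_mul, h0, zero_mul, add_zero, ← Finset.mul_sum, ← Finset.mul_sum]
  have e2 : eval a (resDiag (_root_.lap Prod.swap ψ)) = eval a (∑ i, pderiv i (pderiv i f)) +
      ∑ i, ∑ j, (eval a (pderiv i f) - eval a (pderiv j f)) * (a i - a j)⁻¹ := by
    rw [lap_apply, map_sum, map_sum, Fintype.sum_prod_type, map_sum, ← Finset.sum_add_distrib]
    refine Finset.sum_congr rfl fun i _ => ?_
    rw [← Finset.add_sum_erase _ _ (Finset.mem_univ i), ← Finset.add_sum_erase _
      (fun j => (eval a (pderiv i f) - eval a (pderiv j f)) * (a i - a j)⁻¹) (Finset.mem_univ i)]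
    rw [sub_self, zero_mul, zero_add, Prod.swap_prod_mk, ← pderiv_resDiag, ← pderiv_resDiag]
    congr 1
    refine Finset.sum_congr rfl fun j hj => ?_
    have hij : i ≠ j := (Finset.ne_of_mem_erase hj).symm
    have h := congrArg (eval a) (hψ.resDiag_pderiv_pderiv i j)
    have h0 : a i - a j ≠ 0 := sub_ne_zero.2 fun h => hij (ha h)
    simp only [map_mul, map_sub, eval_X] at h
    rw [← h, Prod.swap_prod_mk]
    field_simp
  have e3 : ∑ i, ∑ j, (eval a (pderiv i f) - eval a (pderiv j f)) * (a i - a j)⁻¹ =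
      2 * ∑ i, eval a (pderiv i f) * ∑ j, (a i - a j)⁻¹ := by
    simp only [sub_mul, Finset.sum_sub_distrib, Finset.mul_sum]
    rw [Finset.sum_comm (f := fun i j => eval a (pderiv j f) * (a i - a j)⁻¹),
      ← Finset.sum_sub_distrib]
    refine Finset.sum_congr rfl fun i _ => ?_
    rw [← Finset.sum_sub_distrib]
    refine Finset.sum_congr rfl fun j _ => ?_
    rw [← neg_sub (a i) (a j), inv_neg]
    ring
  rw [e1, map_mul, e2, e3, map_add, map_mul, map_mul, map_sum _ (fun i => _ * _), eval_vdmP]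
  simp only [map_mul, eval_pderiv_vdmP ha, map_ofNat, mul_add]
  congr 1
  rw [mul_left_comm, Finset.mul_sum]
  congr 1
  refine Finset.sum_congr rfl fun i _ => ?_
  ring

end Radial

section HarishChandra

variable {n : ℕ}

/-- `P` acts on conjugation-invariant polynomials and its radial part, conjugated by the
Vandermonde polynomial, is `Q`. -/
def HasRadialPart (P : Module.End ℂ (MvPolynomial (Fin n × Fin n) ℂ))
    (Q : Module.End ℂ (MvPolynomial (Fin n) ℂ)) : Prop :=
  ∀ ψ, IsConjInv ψ → IsConjInv (P ψ) ∧ vdmP n * resDiag (P ψ) = Q (vdmP n * resDiag ψ)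

theorem HasRadialPart.mul {P P' : Module.End ℂ (MvPolynomial (Fin n × Fin n) ℂ)}
    {Q Q' : Module.End ℂ (MvPolynomial (Fin n) ℂ)} (h : HasRadialPart P Q)
    (h' : HasRadialPart P' Q') : HasRadialPart (P * P') (Q * Q') := fun ψ hψ => by
  obtain ⟨h1, h2⟩ := h' ψ hψ
  obtain ⟨h3, h4⟩ := h _ h1
  exact ⟨h3, by rw [Module.End.mul_apply, Module.End.mul_apply, h4, h2]⟩

theorem HasRadialPart.sub {P P' : Module.End ℂ (MvPolynomial (Fin n × Fin n) ℂ)}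
    {Q Q' : Module.End ℂ (MvPolynomial (Fin n) ℂ)} (h : HasRadialPart P Q)
    (h' : HasRadialPart P' Q') : HasRadialPart (P - P') (Q - Q') := fun ψ hψ => by
  obtain ⟨h1, h2⟩ := h' ψ hψ
  obtain ⟨h3, h4⟩ := h _ hψ
  refine ⟨h3.sub h1, ?_⟩
  rw [LinearMap.sub_apply, LinearMap.sub_apply, map_sub, mul_sub, h4, h2]

theorem hasRadialPart_lap : HasRadialPart (lap (Prod.swap : Fin n × Fin n → _)) (lap id) :=
  fun _ hψ => ⟨hψ.lap, hψ.vdmP_mul_resDiag_lap⟩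

theorem IsConjInv.hasRadialPart_mulOp {p : MvPolynomial (Fin n × Fin n) ℂ} (hp : IsConjInv p) :
    HasRadialPart (mulOp p) (mulOp (resDiag p)) := fun ψ hψ => by
  refine ⟨hp.mul hψ, ?_⟩
  rw [mulOp_apply, mulOp_apply, map_mul]
  ring

theorem HasRadialPart.adLap_pow {P : Module.End ℂ (MvPolynomial (Fin n × Fin n) ℂ)}
    {Q : Module.End ℂ (MvPolynomial (Fin n) ℂ)} (h : HasRadialPart P Q) (k : ℕ) :
    HasRadialPart ((adLap Prod.swap ^ k) P) ((adLap id ^ k) Q) := by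
  induction k with
  | zero => exact h
  | succ k ih =>
    rw [pow_succ', pow_succ', Module.End.mul_apply, Module.End.mul_apply, adLap_apply, adLap_apply]
    exact (hasRadialPart_lap.mul ih).sub (ih.mul hasRadialPart_lap)

theorem isHomogeneous_resDiag {p : MvPolynomial (Fin n × Fin n) ℂ} {k : ℕ}
    (hp : p.IsHomogeneous k) : (resDiag p).IsHomogeneous k := by
  rw [← one_mul k]
  refine hp.aeval _ fun i => ?_
  split_ifs
  · exact isHomogeneous_X _ _
  · exact isHomogeneous_zero _ _ _

/-- The Harish-Chandra homomorphism for constant-coefficient invariant differential operators. -/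
theorem vdmP_mul_resDiag_diffOp {p ψ : MvPolynomial (Fin n × Fin n) ℂ} {k : ℕ}
    (hp : IsConjInv p) (hk : p.IsHomogeneous k) (hψ : IsConjInv ψ) :
    vdmP n * resDiag (diffOp Prod.swap p ψ) = diffOp id (resDiag p) (vdmP n * resDiag ψ) := by
  have h := ((hp.hasRadialPart_mulOp.adLap_pow k) ψ hψ).2
  rw [adLap_pow_mulOp Prod.swap_swap hk,
    adLap_pow_mulOp (fun _ => rfl) (isHomogeneous_resDiag hk), LinearMap.smul_apply,
    LinearMap.smul_apply, map_smul, mul_smul_comm] at h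
  refine smul_right_injective _ ?_ h
  exact mul_ne_zero (pow_ne_zero _ two_ne_zero) (Nat.cast_ne_zero.2 k.factorial_ne_zero)

end HarishChandra

section UnitaryInvariance

variable {n : ℕ}

theorem hasDerivAt_eval_curve {σ : Type*} [Fintype σ] (ψ : MvPolynomial σ ℂ) {γ : ℝ → σ → ℂ}
    {γ' : σ → ℂ} {t : ℝ} (hγ : ∀ i, HasDerivAt (fun s => γ s i) (γ' i) t) :
    HasDerivAt (fun s => eval (γ s) ψ) (∑ i, γ' i * eval (γ t) (pderiv i ψ)) t := by
  classical
  induction ψ using MvPolynomial.induction_on with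
  | C c => simpa using hasDerivAt_const t c
  | add p q hp hq =>
    simp only [map_add, mul_add, Finset.sum_add_distrib]
    exact hp.add hq
  | mul_X p k hp =>
    simp only [map_mul, eval_X]
    refine (hp.mul (hγ k)).congr_deriv ?_
    simp only [pderiv_mul, map_add, map_mul, pderiv_X, Pi.single_apply, eval_X, mul_add,
      Finset.sum_add_distrib, apply_ite (eval (γ t)), map_zero, mul_ite, mul_one, mul_zero,
      Finset.sum_ite_eq, Finset.mem_univ, if_true, Finset.sum_mul]
    rw [mul_comm (γ' k)]
    simp only [mul_assoc]

attribute [local instance] Matrix.linftyOpNormedRing Matrix.linftyOpNormedAlgebra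

theorem hasDerivAt_conj_exp (S A : Matrix (Fin n) (Fin n) ℂ) :
    HasDerivAt (fun t : ℝ => NormedSpace.exp (t • S) * A * NormedSpace.exp (t • -S))
      (S * A - A * S) 0 := by
  have h1 := hasDerivAt_exp_smul_const (𝕂 := ℝ) S (0 : ℝ)
  have h2 := hasDerivAt_exp_smul_const (𝕂 := ℝ) (-S) (0 : ℝ)
  refine ((h1.mul_const A).mul h2).congr_deriv ?_
  simp [sub_eq_add_neg]

theorem sum_commutator_eval_pderiv_of_skew {ψ : MvPolynomial (Fin n × Fin n) ℂ}
    (h : ∀ V ∈ Matrix.unitaryGroup (Fin n) ℂ, ∀ A : Matrix (Fin n) (Fin n) ℂ,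
      eval (fun p => (V * A * star V) p.1 p.2) ψ = eval (fun p => A p.1 p.2) ψ)
    {S : Matrix (Fin n) (Fin n) ℂ} (hS : star S = -S) (A : Matrix (Fin n) (Fin n) ℂ) :
    ∑ p : Fin n × Fin n, (S * A - A * S) p.1 p.2 *
      eval (fun p => A p.1 p.2) (pderiv p ψ) = 0 := by
  have hd := hasDerivAt_conj_exp S A
  have hd' : ∀ p : Fin n × Fin n, HasDerivAt (fun t : ℝ =>
      (NormedSpace.exp (t • S) * A * NormedSpace.exp (t • -S)) p.1 p.2)
      ((S * A - A * S) p.1 p.2) 0 := by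
    intro p
    have h3 := (Matrix.entryLinearMap ℝ ℂ p.1 p.2).toContinuousLinearMap.hasFDerivAt.comp_hasDerivAt
      (0 : ℝ) hd
    exact h3
  have hc := hasDerivAt_eval_curve ψ hd'
  have hconst : ∀ t : ℝ, eval (fun p : Fin n × Fin n =>
      (NormedSpace.exp (t • S) * A * NormedSpace.exp (t • -S)) p.1 p.2) ψ =
      eval (fun p => A p.1 p.2) ψ := by
    intro t
    have hs : NormedSpace.exp (t • -S) = star (NormedSpace.exp (t • S)) := by
      have hc : (t • S).conjTranspose = t • -S := by
        rw [Matrix.conjTranspose_smul, star_trivial, ← Matrix.star_eq_conjTranspose, hS]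
      rw [← hc]
      exact Matrix.exp_conjTranspose (t • S)
    have hu : NormedSpace.exp (t • S) ∈ Matrix.unitaryGroup (Fin n) ℂ := by
      rw [Matrix.mem_unitaryGroup_iff, ← hs, ← Matrix.exp_add_of_commute _ _
        (((Commute.refl S).neg_right.smul_right t).smul_left t), smul_neg, add_neg_cancel,
        NormedSpace.exp_zero]
    rw [hs]
    exact h _ hu A
  simp only [hconst] at hc
  have := hc.unique (hasDerivAt_const (0 : ℝ) _)
  simpa using this

/-- A polynomial function of matrices that is invariant under unitary conjugation is
infinitesimally invariant under all conjugations. -/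
theorem isConjInv_of_unitary_invariant {ψ : MvPolynomial (Fin n × Fin n) ℂ}
    (h : ∀ V ∈ Matrix.unitaryGroup (Fin n) ℂ, ∀ A : Matrix (Fin n) (Fin n) ℂ,
      eval (fun p => (V * A * star V) p.1 p.2) ψ = eval (fun p => A p.1 p.2) ψ) :
    IsConjInv ψ := by
  intro i j
  refine MvPolynomial.funext fun x => ?_
  set A : Matrix (Fin n) (Fin n) ℂ := Matrix.of fun k l => x (k, l) with hA
  let L : Matrix (Fin n) (Fin n) ℂ →ₗ[ℂ] ℂ :=
    { toFun := fun S => ∑ p : Fin n × Fin n, (S * A - A * S) p.1 p.2 * eval x (pderiv p ψ)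
      map_add' := fun S T => by
        rw [← Finset.sum_add_distrib]
        refine Finset.sum_congr rfl fun p _ => ?_
        simp only [add_mul, mul_add, Matrix.sub_apply, Matrix.add_apply]
        ring
      map_smul' := fun c S => by
        rw [RingHom.id_apply, smul_eq_mul, Finset.mul_sum]
        refine Finset.sum_congr rfl fun p _ => ?_
        simp only [Matrix.smul_mul, Matrix.mul_smul, Matrix.sub_apply, Matrix.smul_apply,
          smul_eq_mul]
        ring }
  have hskew : ∀ S, star S = -S → L S = 0 := fun S hS =>
    sum_commutator_eval_pderiv_of_skew h hS A
  have hzero : ∀ S, L S = 0 := by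
    intro S
    have h1 : L (S - star S) = 0 := hskew _ (by simp)
    have h2 : L (Complex.I • (S + star S)) = 0 := hskew _ (by
      simp [add_comm])
    rw [map_smul, smul_eq_mul, mul_eq_zero, or_iff_right Complex.I_ne_zero, map_add] at h2
    rw [map_sub] at h1
    linear_combination (h1 + h2) / 2
  have h3 : ∑ p : Fin n × Fin n, ((Matrix.single i j 1 * A - A * Matrix.single i j 1 :
      Matrix (Fin n) (Fin n) ℂ) p.1 p.2) *
      eval x (pderiv p ψ) = 0 := hzero (Matrix.single i j 1)
  rw [map_zero, ← h3, conjDeriv_apply, map_sum, Fintype.sum_prod_type]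
  simp only [map_sub, map_mul, eval_X, Matrix.sub_apply, sub_mul, Finset.sum_sub_distrib]
  congr 1
  · symm
    rw [Finset.sum_eq_single i]
    · simp [hA]
    · intro k _ hk
      refine Finset.sum_eq_zero fun l _ => ?_
      rw [Matrix.single_mul_apply_of_ne _ _ _ _ _ hk, zero_mul]
    · simp
  · refine Finset.sum_congr rfl fun k _ => ?_
    rw [Finset.sum_eq_single j]
    · simp [hA]
    · intro l _ hl
      rw [Matrix.mul_single_apply_of_ne _ _ _ _ _ hl, zero_mul]
    · simp

end UnitaryInvariance

section Average

/-- The average of a family of homogeneous polynomials of degree `m`. -/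
def avgPoly {G σ : Type*} [MeasurableSpace G] [Fintype σ] [DecidableEq σ] (μ : Measure G) (m : ℕ)
    (P : G → MvPolynomial σ ℂ) : MvPolynomial σ ℂ :=
  ∑ s ∈ Finset.finsuppAntidiag Finset.univ m, monomial s (∫ g, coeff s (P g) ∂μ)

variable {G σ : Type*} [MeasurableSpace G] [Fintype σ] [DecidableEq σ] {μ : Measure G} {m : ℕ}
  {P : G → MvPolynomial σ ℂ}

theorem isHomogeneous_avgPoly : (avgPoly μ m P).IsHomogeneous m := by
  refine IsHomogeneous.sum _ _ _ fun s hs => isHomogeneous_monomial _ ?_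
  rw [Finset.mem_finsuppAntidiag] at hs
  rw [Finsupp.degree_eq_sum, hs.1]

theorem apply_avgPoly (hP : ∀ g, (P g).IsHomogeneous m)
    (hi : ∀ s, Integrable (fun g => coeff s (P g)) μ) (Λ : MvPolynomial σ ℂ →ₗ[ℂ] ℂ) :
    Λ (avgPoly μ m P) = ∫ g, Λ (P g) ∂μ := by
  have h : ∀ g, Λ (P g) = ∑ s ∈ Finset.finsuppAntidiag Finset.univ m,
      coeff s (P g) * Λ (monomial s 1) := by
    intro g
    have hsub : (P g).support ⊆ Finset.finsuppAntidiag Finset.univ m := by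
      intro s hs
      have h1 : s.degree = m := by
        rw [Finsupp.degree_eq_weight_one]
        exact hP g (mem_support_iff.1 hs)
      rw [Finset.mem_finsuppAntidiag]
      exact ⟨by rw [← h1, Finsupp.degree_eq_sum], Finset.subset_univ _⟩
    conv_lhs => rw [(P g).as_sum, map_sum]
    rw [← Finset.sum_subset hsub]
    · refine Finset.sum_congr rfl fun s _ => ?_
      rw [← smul_eq_mul, ← map_smul, smul_monomial, smul_eq_mul, mul_one]
    · intro s _ hs
      rw [notMem_support_iff.1 hs, zero_mul]
  simp only [h]
  rw [integral_finsetSum _ fun s _ => (hi s).mul_const _, avgPoly, map_sum]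
  refine Finset.sum_congr rfl fun s _ => ?_
  rw [integral_mul_const, ← smul_eq_mul (∫ g, coeff s (P g) ∂μ), ← map_smul, smul_monomial,
    smul_eq_mul, mul_one]

end Average

section UnitaryGroup

variable {n : ℕ}

instance matrixBorelSpace : BorelSpace (Matrix (Fin n) (Fin n) ℂ) := ⟨rfl⟩

instance matrixSecondCountable : SecondCountableTopology (Matrix (Fin n) (Fin n) ℂ) :=
  inferInstanceAs (SecondCountableTopology (Fin n → Fin n → ℂ))

instance unitaryGroupCompactSpace : CompactSpace (Matrix.unitaryGroup (Fin n) ℂ) := by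
  refine isCompact_iff_compactSpace.1 ?_
  refine IsCompact.of_isClosed_subset (s := {A : Matrix (Fin n) (Fin n) ℂ |
    ∀ i, A i ∈ {v : Fin n → ℂ | ∀ j, v j ∈ Metric.closedBall (0 : ℂ) 1}}) ?_ ?_ ?_
  · exact isCompact_pi_infinite fun i => isCompact_pi_infinite fun j => isCompact_closedBall 0 1
  · have : ((Matrix.unitaryGroup (Fin n) ℂ : Submonoid (Matrix (Fin n) (Fin n) ℂ)) :
        Set (Matrix (Fin n) (Fin n) ℂ)) = {A | A * star A = 1} := by
      ext A
      exact Matrix.mem_unitaryGroup_iff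
    rw [this]
    exact isClosed_eq (by fun_prop) continuous_const
  · intro A hA i j
    rw [mem_closedBall_zero_iff]
    exact entry_norm_bound_of_unitary hA i j

end UnitaryGroup

section CompactGroup

variable {G : Type*} [Group G] [TopologicalSpace G] [IsTopologicalGroup G] [MeasurableSpace G]
  [BorelSpace G] {μ : Measure G}

theorem integral_mul_left_of_map_eq (hμ : ∀ V : G, Measure.map (fun U => V * U) μ = μ)
    (F : G → ℂ) (V : G) : ∫ U, F (V * U) ∂μ = ∫ U, F U ∂μ := by
  conv_rhs => rw [← hμ V]
  exact ((Homeomorph.mulLeft V).measurableEmbedding.integral_map F).symm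

variable [CompactSpace G] [IsProbabilityMeasure μ]

theorem integral_inv_of_map_eq (hμ : ∀ V : G, Measure.map (fun U => V * U) μ = μ)
    {F : G → ℂ} (hF : Continuous F) : ∫ U, F U⁻¹ ∂μ = ∫ U, F U ∂μ := by
  have h := integral_integral_swap_of_hasCompactSupport (f := fun x y : G => F (x⁻¹ * y))
    (μ := μ) (ν := μ) (by unfold Function.uncurry; fun_prop) (HasCompactSupport.of_compactSpace _)
  simp only [fun x : G => integral_mul_left_of_map_eq hμ F x⁻¹] at h
  have h2 : ∀ y : G, ∫ x, F (x⁻¹ * y) ∂μ = ∫ x, F x⁻¹ ∂μ := by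
    intro y
    rw [← integral_mul_left_of_map_eq hμ (fun x => F (x⁻¹ * y)) y]
    simp
  simp only [h2, integral_const, probReal_univ, one_smul] at h
  exact h.symm

theorem integral_mul_right_of_map_eq (hμ : ∀ V : G, Measure.map (fun U => V * U) μ = μ)
    {F : G → ℂ} (hF : Continuous F) (V : G) : ∫ U, F (U * V) ∂μ = ∫ U, F U ∂μ := by
  rw [← integral_inv_of_map_eq hμ (F := fun U => F (U * V)) (by fun_prop),
    ← integral_inv_of_map_eq hμ hF, ← integral_mul_left_of_map_eq hμ (fun U => F U⁻¹) V⁻¹]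
  simp

end CompactGroup

section Orbit

variable {n : ℕ}

/-- The coefficients of the linear functional `A ↦ tr (A U* B U)`. -/
def orbitCoeff (b : Fin n → ℂ) (U : Matrix.unitaryGroup (Fin n) ℂ) (p : Fin n × Fin n) : ℂ :=
  (star (U : Matrix (Fin n) (Fin n) ℂ) * Matrix.diagonal b * (U : Matrix (Fin n) (Fin n) ℂ)) p.2 p.1

theorem continuous_orbitCoeff (b : Fin n → ℂ) (p : Fin n × Fin n) :
    Continuous fun U => orbitCoeff b U p := by
  unfold orbitCoeff
  refine Continuous.matrix_elem ?_ _ _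
  fun_prop

theorem sum_orbitCoeff_mul (b : Fin n → ℂ) (U : Matrix.unitaryGroup (Fin n) ℂ)
    (A : Matrix (Fin n) (Fin n) ℂ) : ∑ p, orbitCoeff b U p * A p.1 p.2 =
      Matrix.trace (A * (star (U : Matrix (Fin n) (Fin n) ℂ) * Matrix.diagonal b *
        (U : Matrix (Fin n) (Fin n) ℂ))) := by
  rw [Fintype.sum_prod_type, Matrix.trace]
  refine Finset.sum_congr rfl fun i _ => ?_
  rw [Matrix.diag_apply, Matrix.mul_apply]
  refine Finset.sum_congr rfl fun j _ => ?_
  rw [orbitCoeff, mul_comm]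

/-- The degree `m` part of `A ↦ ∫ exp (tr (A U* B U)) dμ(U)`. -/
def orbitPoly (μ : Measure (Matrix.unitaryGroup (Fin n) ℂ)) (b : Fin n → ℂ) (m : ℕ) :
    MvPolynomial (Fin n × Fin n) ℂ :=
  avgPoly μ m fun U => expPart (orbitCoeff b U) m

theorem isHomogeneous_orbitPoly (μ : Measure (Matrix.unitaryGroup (Fin n) ℂ)) (b : Fin n → ℂ)
    (m : ℕ) : (orbitPoly μ b m).IsHomogeneous m :=
  isHomogeneous_avgPoly

variable {μ : Measure (Matrix.unitaryGroup (Fin n) ℂ)} [IsProbabilityMeasure μ]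

theorem integrable_coeff_expPart_orbitCoeff (b : Fin n → ℂ) (m : ℕ) (s : Fin n × Fin n →₀ ℕ) :
    Integrable (fun U => coeff s (expPart (orbitCoeff b U) m)) μ := by
  refine Continuous.integrable_of_hasCompactSupport ?_ (HasCompactSupport.of_compactSpace _)
  simp only [expPart, coeff_smul, coeff_linearCombination_X_pow_of_fintype]
  split_ifs
  · refine Continuous.const_smul (continuous_const.mul
      (continuous_finsetProd _ fun p _ => ?_)) (m.factorial : ℂ)⁻¹
    exact (continuous_orbitCoeff b p).pow _
  · exact continuous_const

theorem apply_orbitPoly (b : Fin n → ℂ) (m : ℕ) (Λ : MvPolynomial (Fin n × Fin n) ℂ →ₗ[ℂ] ℂ) :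
    Λ (orbitPoly μ b m) = ∫ U, Λ (expPart (orbitCoeff b U) m) ∂μ :=
  apply_avgPoly (fun _ => isHomogeneous_expPart _ _)
    (fun s => integrable_coeff_expPart_orbitCoeff b m s) Λ

theorem eval_orbitPoly (b : Fin n → ℂ) (m : ℕ) (A : Matrix (Fin n) (Fin n) ℂ) :
    eval (fun p => A p.1 p.2) (orbitPoly μ b m) =
      ∫ U : Matrix.unitaryGroup (Fin n) ℂ, (m.factorial : ℂ)⁻¹ *
        Matrix.trace (A * (star (U : Matrix (Fin n) (Fin n) ℂ) * Matrix.diagonal b *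
          (U : Matrix (Fin n) (Fin n) ℂ))) ^ m ∂μ := by
  have h := apply_orbitPoly (μ := μ) b m
    (aeval (R := ℂ) fun p : Fin n × Fin n => A p.1 p.2).toLinearMap
  simp only [AlgHom.toLinearMap_apply, aeval_eq_eval] at h
  simpa only [eval_expPart, sum_orbitCoeff_mul] using h

theorem eval_orbitPoly_conj (hμ : ∀ V, Measure.map (fun U => V * U) μ = μ) (b : Fin n → ℂ) (m : ℕ)
    {V : Matrix (Fin n) (Fin n) ℂ} (hV : V ∈ Matrix.unitaryGroup (Fin n) ℂ)
    (A : Matrix (Fin n) (Fin n) ℂ) :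
    eval (fun p => (V * A * star V) p.1 p.2) (orbitPoly μ b m) =
      eval (fun p => A p.1 p.2) (orbitPoly μ b m) := by
  rw [eval_orbitPoly, eval_orbitPoly, ← integral_mul_right_of_map_eq hμ
    (F := fun U : Matrix.unitaryGroup (Fin n) ℂ => (m.factorial : ℂ)⁻¹ *
        Matrix.trace (A * (star (U : Matrix (Fin n) (Fin n) ℂ) * Matrix.diagonal b *
          (U : Matrix (Fin n) (Fin n) ℂ))) ^ m) (by fun_prop) ⟨V, hV⟩]
  congr! 4 with U
  rw [Matrix.UnitaryGroup.mul_val, star_mul, Matrix.mul_assoc V, Matrix.mul_assoc V,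
    Matrix.trace_mul_comm]
  simp only [Matrix.mul_assoc]

theorem isConjInv_orbitPoly (hμ : ∀ V, Measure.map (fun U => V * U) μ = μ) (b : Fin n → ℂ)
    (m : ℕ) : IsConjInv (orbitPoly μ b m) :=
  isConjInv_of_unitary_invariant fun _ hV A => eval_orbitPoly_conj hμ b m hV A

theorem eval_charpoly_univ_coeff (A : Matrix (Fin n) (Fin n) ℂ) (k : ℕ) :
    eval (fun p => A p.1 p.2) ((Matrix.charpoly.univ ℂ (Fin n)).coeff k) = A.charpoly.coeff k :=
  Matrix.charpoly.univ_coeff_eval₂Hom (Fin n) (RingHom.id ℂ) (fun p => A p.1 p.2) k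

theorem charpoly_conj_unitary {V : Matrix (Fin n) (Fin n) ℂ}
    (hV : V ∈ Matrix.unitaryGroup (Fin n) ℂ) (A : Matrix (Fin n) (Fin n) ℂ) :
    (V * A * star V).charpoly = A.charpoly := by
  have h := Matrix.charpoly_units_conj ⟨V, star V, Matrix.mem_unitaryGroup_iff.1 hV,
    Matrix.mem_unitaryGroup_iff'.1 hV⟩ A
  rwa [← Matrix.coe_units_inv] at h

theorem isConjInv_charpoly_univ_coeff (k : ℕ) :
    IsConjInv ((Matrix.charpoly.univ ℂ (Fin n)).coeff k) :=
  isConjInv_of_unitary_invariant fun _ hV A => by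
    rw [eval_charpoly_univ_coeff, eval_charpoly_univ_coeff, charpoly_conj_unitary hV]

theorem diffOp_charpoly_orbitPoly (b : Fin n → ℂ) {k l : ℕ} (hkl : k + l = n) (m : ℕ) :
    diffOp Prod.swap ((Matrix.charpoly.univ ℂ (Fin n)).coeff k) (orbitPoly μ b m) =
      if l ≤ m then (Matrix.diagonal b).charpoly.coeff k • orbitPoly μ b (m - l) else 0 := by
  ext s
  have h := apply_orbitPoly (μ := μ) b m
    (lcoeff ℂ s ∘ₗ diffOp Prod.swap ((Matrix.charpoly.univ ℂ (Fin n)).coeff k))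
  simp only [LinearMap.comp_apply, lcoeff_apply] at h
  rw [h]
  have h2 : ∀ U : Matrix.unitaryGroup (Fin n) ℂ,
      eval (orbitCoeff b U ∘ Prod.swap) ((Matrix.charpoly.univ ℂ (Fin n)).coeff k) =
        (Matrix.diagonal b).charpoly.coeff k := by
    intro U
    have h3 := charpoly_conj_unitary (star U).2 (Matrix.diagonal b)
    rw [Unitary.coe_star, star_star] at h3
    rw [← h3, ← eval_charpoly_univ_coeff]
    rfl
  simp only [diffOp_expPart Prod.swap _ (Matrix.charpoly.univ_coeff_isHomogeneous ℂ (Fin n) k l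
    (hkl.trans (Fintype.card_fin n).symm)), h2]
  split_ifs
  · have h4 := apply_orbitPoly (μ := μ) b (m - l) (lcoeff ℂ s)
    simp only [lcoeff_apply] at h4
    simp only [coeff_smul]
    rw [integral_smul, h4]
  · simp

end Orbit

section AlternatingExponential

variable {n : ℕ}

/-- The degree `j` part of `∑_π sign π exp (∑ a_i b_{π i})` as a polynomial in `a`. -/
def altExp (b : Fin n → ℂ) (j : ℕ) : MvPolynomial (Fin n) ℂ :=
  ∑ π : Equiv.Perm (Fin n), ((Equiv.Perm.sign π : ℤ) : ℂ) • expPart (b ∘ π) j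

theorem eval_altExp (b a : Fin n → ℂ) (j : ℕ) : eval a (altExp b j) =
    ∑ π : Equiv.Perm (Fin n), ((Equiv.Perm.sign π : ℤ) : ℂ) *
      ((j.factorial : ℂ)⁻¹ * (∑ i, b (π i) * a i) ^ j) := by
  simp [altExp, map_sum, smul_eval, eval_expPart]

theorem isAlternatingPoly_altExp (b : Fin n → ℂ) (j : ℕ) : IsAlternatingPoly (altExp b j) := by
  intro ρ
  refine MvPolynomial.funext fun a => ?_
  rw [eval_rename, smul_eval, eval_altExp, eval_altExp, Finset.mul_sum,
    ← Equiv.sum_comp (Equiv.mulRight ρ)]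
  refine Finset.sum_congr rfl fun π _ => ?_
  rw [← Equiv.sum_comp ρ fun i => b (π i) * a i]
  simp only [Equiv.coe_mulRight, Equiv.Perm.sign_mul, Equiv.Perm.coe_mul, Function.comp_apply]
  push_cast
  ring

theorem isHomogeneous_altExp (b : Fin n → ℂ) (j : ℕ) : (altExp b j).IsHomogeneous j :=
  IsHomogeneous.sum _ _ _ fun _ _ =>
    (homogeneousSubmodule _ ℂ j).smul_mem _ (isHomogeneous_expPart _ _)

/-- The elementary symmetric polynomials, up to sign, as coefficients of the characteristic
polynomial of a diagonal matrix. -/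
def diagCharCoeff (n k : ℕ) : MvPolynomial (Fin n) ℂ :=
  resDiag ((Matrix.charpoly.univ ℂ (Fin n)).coeff k)

theorem isHomogeneous_diagCharCoeff {k l : ℕ} (hkl : k + l = n) :
    (diagCharCoeff n k).IsHomogeneous l :=
  isHomogeneous_resDiag (Matrix.charpoly.univ_coeff_isHomogeneous ℂ (Fin n) k l
    (hkl.trans (Fintype.card_fin n).symm))

theorem eval_diagCharCoeff (a : Fin n → ℂ) (k : ℕ) :
    eval a (diagCharCoeff n k) = (Matrix.diagonal a).charpoly.coeff k := by
  rw [diagCharCoeff, eval_resDiag, eval_charpoly_univ_coeff]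

theorem charpoly_diagonal_comp_perm (a : Fin n → ℂ) (π : Equiv.Perm (Fin n)) :
    (Matrix.diagonal (a ∘ π)).charpoly = (Matrix.diagonal a).charpoly := by
  rw [Matrix.charpoly_diagonal, Matrix.charpoly_diagonal,
    ← Equiv.prod_comp π fun i => Polynomial.X - Polynomial.C (a i)]
  rfl

theorem sum_diagCharCoeff_mul_X_pow (i : Fin n) :
    ∑ k ∈ Finset.range (n + 1), diagCharCoeff n k * X i ^ k = 0 := by
  refine MvPolynomial.funext fun a => ?_
  simp only [map_sum, map_mul, map_pow, eval_X, map_zero, eval_diagCharCoeff]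
  have h := Polynomial.eval_eq_sum_range (p := (Matrix.diagonal a).charpoly) (a i)
  rw [Matrix.charpoly_natDegree_eq_dim, Fintype.card_fin] at h
  rw [← h, Matrix.charpoly_diagonal, Polynomial.eval_prod]
  exact Finset.prod_eq_zero (Finset.mem_univ i) (by simp)

theorem diagCharCoeff_self : diagCharCoeff n n = 1 := by
  have h := Matrix.charpoly.univ_coeff_card ℂ (Fin n)
  rw [Fintype.card_fin] at h
  rw [diagCharCoeff, h, map_one]

theorem pd_pow_eq_zero_of_diffOp_diagCharCoeff {q : MvPolynomial (Fin n) ℂ}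
    (h : ∀ k < n, diffOp id (diagCharCoeff n k) q = 0) (i : Fin n) : (pd i ^ n) q = 0 := by
  have h1 := congrArg (fun p => diffOp id p q) (sum_diagCharCoeff_mul_X_pow i)
  simp only [map_sum, map_zero, LinearMap.zero_apply, LinearMap.sum_apply] at h1
  rw [Finset.sum_range_succ, Finset.sum_eq_zero, zero_add, diagCharCoeff_self, one_mul, map_pow,
    diffOp_X] at h1
  · exact h1
  · intro k hk
    rw [mul_comm, map_mul, Module.End.mul_apply, h k (Finset.mem_range.1 hk), map_zero]

theorem diffOp_diagCharCoeff_altExp (b : Fin n → ℂ) {k l : ℕ} (hkl : k + l = n) (j : ℕ) :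
    diffOp id (diagCharCoeff n k) (altExp b j) =
      if l ≤ j then (Matrix.diagonal b).charpoly.coeff k • altExp b (j - l) else 0 := by
  simp only [altExp, map_sum, map_smul, diffOp_expPart id _ (isHomogeneous_diagCharCoeff hkl),
    Function.comp_id, eval_diagCharCoeff, charpoly_diagonal_comp_perm]
  split_ifs
  · rw [Finset.smul_sum]
    exact Finset.sum_congr rfl fun π _ => smul_comm _ _ _
  · simp

/-- The reciprocal of the superfactorial of `n - 1`. -/
def altConst (n : ℕ) : ℝ := ((delta n).degree.factorial : ℝ)⁻¹ * (delta n).multinomial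

theorem altConst_pos : 0 < altConst n :=
  mul_pos (inv_pos.2 (Nat.cast_pos.2 (Nat.factorial_pos _)))
    (Nat.cast_pos.2 (Nat.multinomial_pos _ _))

theorem coeff_delta_altExp (b : Fin n → ℂ) :
    coeff (delta n) (altExp b (delta n).degree) = (altConst n : ℂ) * vdmC b := by
  have hdeg : ((delta n).sum fun _ m => m) = (delta n).degree := rfl
  simp only [altExp, expPart, coeff_sum, coeff_smul, coeff_linearCombination_X_pow_of_fintype,
    smul_eq_mul, hdeg, if_true]
  rw [vdmC_eq_det, Matrix.det_apply', Finset.mul_sum]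
  refine Finset.sum_congr rfl fun π _ => ?_
  rw [Finsupp.prod_fintype _ _ fun i => pow_zero _, altConst]
  simp only [Matrix.vandermonde_apply, delta_apply, Function.comp_apply]
  push_cast
  ring

end AlternatingExponential

section Uniqueness

variable {n : ℕ} {μ : Measure (Matrix.unitaryGroup (Fin n) ℂ)} [IsProbabilityMeasure μ]

theorem exists_unitary_conj_diagonal (a : Fin n → ℂ) (π : Equiv.Perm (Fin n)) :
    ∃ V ∈ Matrix.unitaryGroup (Fin n) ℂ,
      V * Matrix.diagonal a * star V = Matrix.diagonal (a ∘ π) := by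
  refine ⟨π.permMatrix ℂ, ?_, ?_⟩
  · rw [Matrix.mem_unitaryGroup_iff, Matrix.star_eq_conjTranspose, Matrix.conjTranspose_permMatrix,
      ← Matrix.permMatrix_mul, inv_mul_cancel, Matrix.permMatrix_one]
  · rw [Matrix.star_eq_conjTranspose, Matrix.conjTranspose_permMatrix, Equiv.Perm.permMatrix,
      Equiv.Perm.permMatrix, PEquiv.toMatrix_toPEquiv_mul, PEquiv.mul_toMatrix_toPEquiv]
    ext i j
    simp [Matrix.diagonal_apply, Equiv.Perm.inv_def]

theorem rename_resDiag_orbitPoly (hμ : ∀ V, Measure.map (fun U => V * U) μ = μ) (b : Fin n → ℂ)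
    (m : ℕ) (π : Equiv.Perm (Fin n)) :
    rename π (resDiag (orbitPoly μ b m)) = resDiag (orbitPoly μ b m) := by
  refine MvPolynomial.funext fun a => ?_
  obtain ⟨V, hV, h⟩ := exists_unitary_conj_diagonal a π
  rw [eval_rename, eval_resDiag, eval_resDiag, ← h, eval_orbitPoly_conj hμ b m hV]

theorem orbitPoly_zero (b : Fin n → ℂ) : orbitPoly μ b 0 = 1 := by
  refine MvPolynomial.funext fun x => ?_
  have h := eval_orbitPoly (μ := μ) b 0 (Matrix.of fun i j => x (i, j))
  simp only [Matrix.of_apply, Prod.mk.eta, Nat.factorial_zero, Nat.cast_one, inv_one, pow_zero,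
    one_mul, integral_const, probReal_univ, one_smul] at h
  rw [map_one]
  exact h

/-- The degree `j` part of `Δ(a) ∫ exp (tr (diag a U* B U)) dμ(U)`. -/
def vdmOrbit (μ : Measure (Matrix.unitaryGroup (Fin n) ℂ)) (b : Fin n → ℂ) (j : ℕ) :
    MvPolynomial (Fin n) ℂ :=
  if (delta n).degree ≤ j then vdmP n * resDiag (orbitPoly μ b (j - (delta n).degree)) else 0

theorem isAlternatingPoly_vdmOrbit (hμ : ∀ V, Measure.map (fun U => V * U) μ = μ) (b : Fin n → ℂ)
    (j : ℕ) : IsAlternatingPoly (vdmOrbit μ b j) := by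
  rw [vdmOrbit]
  split_ifs
  · intro π
    rw [map_mul, isAlternatingPoly_vdmP π, rename_resDiag_orbitPoly hμ, smul_mul_assoc]
  · exact isAlternatingPoly_zero

theorem isHomogeneous_vdmOrbit (μ : Measure (Matrix.unitaryGroup (Fin n) ℂ)) (b : Fin n → ℂ)
    (j : ℕ) : (vdmOrbit μ b j).IsHomogeneous j := by
  rw [vdmOrbit]
  split_ifs with h
  · have h1 := isHomogeneous_vdmP.mul (isHomogeneous_resDiag (isHomogeneous_orbitPoly μ b
      (j - (delta n).degree)))
    rwa [Nat.add_sub_cancel' h] at h1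
  · exact isHomogeneous_zero _ _ _

theorem diffOp_diagCharCoeff_vdmOrbit (hμ : ∀ V, Measure.map (fun U => V * U) μ = μ)
    (b : Fin n → ℂ) {k l : ℕ} (hkl : k + l = n) (j : ℕ) :
    diffOp id (diagCharCoeff n k) (vdmOrbit μ b j) =
      if l ≤ j then (Matrix.diagonal b).charpoly.coeff k • vdmOrbit μ b (j - l) else 0 := by
  have hhom := Matrix.charpoly.univ_coeff_isHomogeneous ℂ (Fin n) k l
    (hkl.trans (Fintype.card_fin n).symm)
  simp only [vdmOrbit]
  by_cases hN : (delta n).degree ≤ j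
  · rw [if_pos hN, diagCharCoeff, ← vdmP_mul_resDiag_diffOp (isConjInv_charpoly_univ_coeff k) hhom
      (isConjInv_orbitPoly hμ b _), diffOp_charpoly_orbitPoly b hkl]
    by_cases hl : l ≤ j - (delta n).degree
    · rw [if_pos hl, if_pos (by omega), if_pos (by omega), map_smul, mul_smul_comm,
        Nat.sub_right_comm]
    · rw [if_neg hl, map_zero, mul_zero]
      split_ifs
      · omega
      · rw [smul_zero]
      · rfl
  · rw [if_neg hN, map_zero]
    split_ifs
    · omega
    · rw [smul_zero]
    · rfl

theorem smul_vdmOrbit_eq_altExp (hμ : ∀ V, Measure.map (fun U => V * U) μ = μ) (b : Fin n → ℂ)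
    (j : ℕ) : ((altConst n : ℂ) * vdmC b) • vdmOrbit μ b j = altExp b j := by
  induction j using Nat.strong_induction_on with
  | _ j ih =>
    rw [← sub_eq_zero]
    have halt := ((isAlternatingPoly_vdmOrbit hμ b j).smul ((altConst n : ℂ) * vdmC b)).sub
      (isAlternatingPoly_altExp b j)
    refine halt.eq_zero (fun s i hs => ?_) ?_
    · refine coeff_eq_zero_of_pd_pow_eq_zero (pd_pow_eq_zero_of_diffOp_diagCharCoeff ?_ i) s hs
      intro k hk
      obtain ⟨l, hl⟩ := Nat.exists_eq_add_of_lt hk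
      have hkl : k + (l + 1) = n := by omega
      rw [map_sub, map_smul, diffOp_diagCharCoeff_vdmOrbit hμ b hkl,
        diffOp_diagCharCoeff_altExp b hkl]
      split_ifs
      · rw [smul_comm, ih _ (by omega), sub_self]
      · simp
    · by_cases hj : j = (delta n).degree
      · subst hj
        rw [coeff_sub, coeff_delta_altExp, coeff_smul, vdmOrbit, if_pos le_rfl, Nat.sub_self,
          orbitPoly_zero, map_one, mul_one, coeff_delta_vdmP, smul_eq_mul, mul_one, sub_self]
      · refine (IsHomogeneous.sub ((homogeneousSubmodule _ ℂ j).smul_mem _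
          (isHomogeneous_vdmOrbit μ b j)) (isHomogeneous_altExp b j)).coeff_eq_zero ?_
        exact fun h => hj h.symm

/-- The Harish-Chandra/Itzykson–Zuber integral over the unitary group. -/
theorem integral_exp_trace_orbit (hμ : ∀ V, Measure.map (fun U => V * U) μ = μ)
    (a b : Fin n → ℂ) :
    (altConst n : ℂ) * vdmC a * vdmC b * ∫ U : Matrix.unitaryGroup (Fin n) ℂ,
        Complex.exp (Matrix.trace (Matrix.diagonal a * (star (U : Matrix (Fin n) (Fin n) ℂ) *
          Matrix.diagonal b * (U : Matrix (Fin n) (Fin n) ℂ)))) ∂μ =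
      ∑ π : Equiv.Perm (Fin n), ((Equiv.Perm.sign π : ℤ) : ℂ) *
        Complex.exp (∑ i, b (π i) * a i) := by
  have hexp : ∀ z : ℂ, HasSum (fun m : ℕ => (m.factorial : ℂ)⁻¹ * z ^ m) (Complex.exp z) := by
    intro z
    have h := NormedSpace.expSeries_div_hasSum_exp z
    rw [← Complex.exp_eq_exp_ℂ] at h
    simpa only [div_eq_inv_mul] using h
  have hR : HasSum (fun j => eval a (altExp b j)) (∑ π : Equiv.Perm (Fin n),
      ((Equiv.Perm.sign π : ℤ) : ℂ) * Complex.exp (∑ i, b (π i) * a i)) := by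
    simp only [eval_altExp]
    exact hasSum_sum fun π _ => (hexp _).mul_left _
  set T : Matrix.unitaryGroup (Fin n) ℂ → ℂ := fun U => Matrix.trace (Matrix.diagonal a *
    (star (U : Matrix (Fin n) (Fin n) ℂ) * Matrix.diagonal b *
      (U : Matrix (Fin n) (Fin n) ℂ))) with hT
  have hTc : Continuous T := by fun_prop
  obtain ⟨R, hRb⟩ := (isCompact_range hTc).isBounded.exists_norm_le
  have hL : HasSum (fun m => eval a (resDiag (orbitPoly μ b m))) (∫ U, Complex.exp (T U) ∂μ) := by
    simp only [eval_resDiag, eval_orbitPoly]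
    refine hasSum_integral_of_dominated_convergence (fun m _ => R ^ m / m.factorial) ?_ ?_ ?_ ?_ ?_
    · intro m
      exact Continuous.aestronglyMeasurable (by fun_prop)
    · intro m
      refine Filter.Eventually.of_forall fun U => ?_
      rw [norm_mul, norm_inv, norm_pow, Complex.norm_natCast, ← div_eq_inv_mul]
      gcongr
      exact hRb _ ⟨U, rfl⟩
    · exact Filter.Eventually.of_forall fun _ => Real.summable_pow_div_factorial R
    · exact integrable_const _
    · exact Filter.Eventually.of_forall fun U => hexp _
  have hS : HasSum (fun j => eval a (altExp b j))
      ((altConst n : ℂ) * vdmC a * vdmC b * ∫ U, Complex.exp (T U) ∂μ) := by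
    rw [← hasSum_nat_add_iff' (delta n).degree, Finset.sum_eq_zero, sub_zero]
    · refine (hL.mul_left ((altConst n : ℂ) * vdmC a * vdmC b)).congr_fun ?_
      intro m
      rw [← smul_vdmOrbit_eq_altExp hμ, smul_eval, vdmOrbit, if_pos (Nat.le_add_left _ _),
        Nat.add_sub_cancel, map_mul, eval_vdmP]
      ring
    · intro j hj
      rw [← smul_vdmOrbit_eq_altExp hμ, vdmOrbit, if_neg (not_le.2 (Finset.mem_range.1 hj)),
        smul_zero, map_zero]
  exact hS.unique hR

end Uniqueness

section Symmetrization

variable {n : ℕ}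

theorem integral_comp_perm (G : (Fin n → ℝ) → ℂ) (π : Equiv.Perm (Fin n)) :
    ∫ b, G (b ∘ π) = ∫ b, G b := by
  have h := (volume_measurePreserving_piCongrLeft (fun _ : Fin n => ℝ) π.symm).integral_comp' G
  rw [← h]
  refine integral_congr_ae (Filter.Eventually.of_forall fun b => congrArg G ?_)
  ext i
  obtain ⟨j, rfl⟩ := π.symm.surjective i
  rw [MeasurableEquiv.coe_piCongrLeft, Equiv.piCongrLeft_apply_apply, Function.comp_apply,
    Equiv.apply_symm_apply]

theorem continuous_vdmC_ofReal : Continuous fun b : Fin n → ℝ => vdmC fun i => (b i : ℂ) := by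
  unfold vdmC
  fun_prop

theorem trace_sq_sub_orbit {A W U : Matrix (Fin n) (Fin n) ℂ} (a b : Fin n → ℂ)
    (hW : W ∈ Matrix.unitaryGroup (Fin n) ℂ) (hU : U ∈ Matrix.unitaryGroup (Fin n) ℂ)
    (hA : A = W * Matrix.diagonal a * star W) :
    Matrix.trace ((A - star U * Matrix.diagonal b * U) ^ 2) =
      ∑ i, a i ^ 2 + ∑ i, b i ^ 2 - 2 * Matrix.trace (Matrix.diagonal a *
        (star (U * W) * Matrix.diagonal b * (U * W))) := by
  have hdiag : ∀ c : Fin n → ℂ,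
      Matrix.trace (Matrix.diagonal c * Matrix.diagonal c) = ∑ i, c i ^ 2 := by
    intro c
    simp [Matrix.diagonal_mul_diagonal, Matrix.trace_diagonal, sq]
  have hconj : ∀ V ∈ Matrix.unitaryGroup (Fin n) ℂ, ∀ c : Fin n → ℂ,
      Matrix.trace (V * Matrix.diagonal c * star V * (V * Matrix.diagonal c * star V)) =
        ∑ i, c i ^ 2 := by
    intro V hV c
    have h1 : V * Matrix.diagonal c * star V * (V * Matrix.diagonal c * star V) =
        V * (Matrix.diagonal c * (star V * V) * Matrix.diagonal c * star V) := by
      simp only [Matrix.mul_assoc]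
    rw [h1, Matrix.trace_mul_comm, Matrix.mem_unitaryGroup_iff'.1 hV, Matrix.mul_one,
      Matrix.mul_assoc, Matrix.mem_unitaryGroup_iff'.1 hV, Matrix.mul_one, hdiag]
  have h2 := hconj W hW a
  have h3 := hconj (star U) (Unitary.star_mem hU) b
  rw [star_star] at h3
  rw [← hA] at h2
  have h4 : Matrix.trace (A * (star U * Matrix.diagonal b * U)) = Matrix.trace (Matrix.diagonal a *
        (star (U * W) * Matrix.diagonal b * (U * W))) := by
    rw [hA, Matrix.mul_assoc W, Matrix.mul_assoc W, Matrix.trace_mul_comm, star_mul]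
    simp only [Matrix.mul_assoc]
  rw [sq, Matrix.sub_mul, Matrix.mul_sub, Matrix.mul_sub, Matrix.trace_sub, Matrix.trace_sub,
    Matrix.trace_sub, Matrix.trace_mul_comm (_ * U) A, h2, h3, h4]
  ring

end Symmetrization

/-- The Harish-Chandra/Itzykson–Zuber formula.  Here the Haar probability measure on `U(n)`
is characterized as a left-invariant probability measure on the (compact) unitary group. -/
theorem harish_chandra_itzykson_zuber (n : ℕ) (hn : 1 ≤ n) :
    ∃ c : ℝ, 0 < c ∧
      ∀ (A : Matrix (Fin n) (Fin n) ℂ) (a : Fin n → ℂ),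
        Function.Injective a →
        (∃ U ∈ Matrix.unitaryGroup (Fin n) ℂ, A = U * Matrix.diagonal a * star U) →
        ∀ μ : Measure (Matrix.unitaryGroup (Fin n) ℂ), IsProbabilityMeasure μ →
          (∀ V : Matrix.unitaryGroup (Fin n) ℂ, Measure.map (fun U => V * U) μ = μ) →
          ∀ f : (Fin n → ℝ) → ℂ, Continuous f → HasCompactSupport f →
            (∀ σ : Equiv.Perm (Fin n), ∀ b : Fin n → ℝ, f (b ∘ σ) = f b) →
            (∫ U : Matrix.unitaryGroup (Fin n) ℂ,
                (∫ b : Fin n → ℝ,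
                  Complex.exp (-(1 / 2 : ℂ) * Matrix.trace
                      ((A - star (U : Matrix (Fin n) (Fin n) ℂ) *
                          Matrix.diagonal (fun i => (b i : ℂ)) *
                          (U : Matrix (Fin n) (Fin n) ℂ)) ^ 2)) *
                    (vdmC fun i => (b i : ℂ)) ^ 2 * f b) ∂μ) =
              (c : ℂ) *
                ∫ b : Fin n → ℝ,
                  Complex.exp (-(1 / 2 : ℂ) * ∑ j, (a j - (b j : ℂ)) ^ 2) *
                    ((vdmC fun i => (b i : ℂ)) / vdmC a) * f b := by
  refine ⟨n.factorial / altConst n, div_pos (Nat.cast_pos.2 n.factorial_pos) altConst_pos, ?_⟩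
  intro A a ha ⟨W, hW, hA⟩ μ hprob hμ f hf hfs hsymm
  have hc0 : (altConst n : ℂ) ≠ 0 := Complex.ofReal_ne_zero.2 altConst_pos.ne'
  have ha0 : vdmC a ≠ 0 := vdmC_ne_zero ha
  have hvc := continuous_vdmC_ofReal (n := n)
  rw [integral_integral_swap_of_hasCompactSupport]
  rotate_left
  · unfold Function.uncurry
    have h1 : Continuous fun p : Matrix.unitaryGroup (Fin n) ℂ × (Fin n → ℝ) =>
        (vdmC fun i => (p.2 i : ℂ)) := hvc.comp continuous_snd
    fun_prop
  · refine HasCompactSupport.intro (isCompact_univ.prod hfs) ?_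
    intro p hp
    have : f p.2 = 0 := image_eq_zero_of_notMem_tsupport fun h => hp ⟨Set.mem_univ _, h⟩
    simp [Function.uncurry, this]
  set G : (Fin n → ℝ) → ℂ := fun b => Complex.exp (-(1 / 2 : ℂ) * ∑ j, (a j - (b j : ℂ)) ^ 2) *
    (vdmC fun i => (b i : ℂ)) * f b with hG
  have hGc : Continuous G := by fun_prop
  have hGs : HasCompactSupport G := hfs.mul_left
  have hGi : ∀ π : Equiv.Perm (Fin n), Integrable fun b => G (b ∘ π) := by
    intro π
    have hcomp := hGs.comp_homeomorph (Homeomorph.piCongrLeft (Y := fun _ : Fin n => ℝ) π.symm)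
    have he : G ∘ (Homeomorph.piCongrLeft (Y := fun _ : Fin n => ℝ) π.symm) =
        fun b => G (b ∘ π) := by
      ext b
      rw [Function.comp_apply]
      congr 1
      ext i
      obtain ⟨j, rfl⟩ := π.symm.surjective i
      rw [Homeomorph.piCongrLeft_apply_apply, Function.comp_apply, Equiv.apply_symm_apply]
    rw [he] at hcomp
    exact (hGc.comp (by fun_prop)).integrable_of_hasCompactSupport hcomp
  have key : ∀ b : Fin n → ℝ, (∫ U : Matrix.unitaryGroup (Fin n) ℂ,
      Complex.exp (-(1 / 2 : ℂ) * Matrix.trace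
        ((A - star (U : Matrix (Fin n) (Fin n) ℂ) * Matrix.diagonal (fun i => (b i : ℂ)) *
          (U : Matrix (Fin n) (Fin n) ℂ)) ^ 2)) * (vdmC fun i => (b i : ℂ)) ^ 2 * f b ∂μ) =
      ((altConst n : ℂ) * vdmC a)⁻¹ * ∑ π : Equiv.Perm (Fin n), G (b ∘ π) := by
    intro b
    set β : Fin n → ℂ := fun i => (b i : ℂ) with hβ
    have h1 := integral_exp_trace_orbit hμ a β
    rw [← integral_mul_right_of_map_eq hμ (by fun_prop) ⟨W, hW⟩] at h1
    have h2 : ∀ U : Matrix.unitaryGroup (Fin n) ℂ, Complex.exp (-(1 / 2 : ℂ) * Matrix.trace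
        ((A - star (U : Matrix (Fin n) (Fin n) ℂ) * Matrix.diagonal β *
          (U : Matrix (Fin n) (Fin n) ℂ)) ^ 2)) * vdmC β ^ 2 * f b =
        Complex.exp (-(1 / 2 : ℂ) * (∑ i, a i ^ 2 + ∑ i, β i ^ 2)) * vdmC β ^ 2 * f b *
          Complex.exp (Matrix.trace (Matrix.diagonal a *
            (star ((U * ⟨W, hW⟩ : Matrix.unitaryGroup (Fin n) ℂ) : Matrix (Fin n) (Fin n) ℂ) *
              Matrix.diagonal β *
              ((U * ⟨W, hW⟩ : Matrix.unitaryGroup (Fin n) ℂ) : Matrix (Fin n) (Fin n) ℂ)))) := by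
      intro U
      rw [trace_sq_sub_orbit a β hW U.2 hA, Matrix.UnitaryGroup.mul_val]
      rw [mul_sub, sub_eq_add_neg, Complex.exp_add]
      ring_nf
    have h3 : ∀ π : Equiv.Perm (Fin n), G (b ∘ π) =
        Complex.exp (-(1 / 2 : ℂ) * (∑ i, a i ^ 2 + ∑ i, β i ^ 2)) * vdmC β * f b *
          (((Equiv.Perm.sign π : ℤ) : ℂ) * Complex.exp (∑ i, β (π i) * a i)) := by
      intro π
      have h4 : (vdmC fun i => ((b ∘ π) i : ℂ)) = ((Equiv.Perm.sign π : ℤ) : ℂ) * vdmC β :=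
        vdmC_comp_perm β π
      have h5 : -(1 / 2 : ℂ) * ∑ j, (a j - ((b ∘ π) j : ℂ)) ^ 2 =
          -(1 / 2 : ℂ) * (∑ i, a i ^ 2 + ∑ i, β i ^ 2) + ∑ i, β (π i) * a i := by
        rw [← Equiv.sum_comp π fun i => β i ^ 2, ← Finset.sum_add_distrib, Finset.mul_sum,
          Finset.mul_sum, ← Finset.sum_add_distrib]
        refine Finset.sum_congr rfl fun i _ => ?_
        simp only [hβ, Function.comp_apply]
        ring
      simp only [hG]
      rw [h4, hsymm, h5, Complex.exp_add]
      ring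
    simp only [h2, h3]
    rw [integral_const_mul, ← Finset.mul_sum, ← h1]
    field_simp
  simp only [key]
  rw [integral_const_mul, integral_finsetSum _ fun π _ => hGi π]
  simp only [integral_comp_perm]
  rw [Finset.sum_const, Finset.card_univ, Fintype.card_perm, Fintype.card_fin, nsmul_eq_mul]
  have hR : ∀ b : Fin n → ℝ, Complex.exp (-(1 / 2 : ℂ) * ∑ j, (a j - (b j : ℂ)) ^ 2) *
      ((vdmC fun i => (b i : ℂ)) / vdmC a) * f b = (vdmC a)⁻¹ * G b := by
    intro b
    simp only [hG]
    ring
  simp only [hR]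
  rw [integral_const_mul]
  push_cast
  field_simp

end
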